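/- For the 2-by-n grid graph P_2 □ P_n (the Cartesian product of the path on 2 vertices and the path on n vertices, n ≥ 2), the 1/2-domination number satisfies γ_{1/2}(P_2 □ P_n) = ⌈n/4⌉. -/

import Mathlib

/-!
Every vertex of the `2 × n` grid has a closed neighborhood of at most `4` vertices, so a set `S`
with `|N[S]| ≥ n` has `4 |S| ≥ n`; this is the lower bound (`ncard_closedNbhd_le`).

For the upper bound, let `k = ⌈n/4⌉` and take the vertices `(i mod 2, 2 i + 1)` for `i < k`, i.e.
every second column with alternating rows (`gridCenter`). Their closed neighborhoods in the
infinite ladder are pairwise disjoint T-shaped blocks of four vertices, and listing these blocks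
one after the other gives an injection of `{0, …, n - 1}` into the dominated vertices
(`gridCover`). The `j`-th listed vertex has column at most `j`, so it does lie in the grid, even
where the last block is cut off by the boundary.
-/

open SimpleGraph

/-- The closed neighborhood `N[S]` of a set of vertices `S`: all vertices that
lie in `S` or are adjacent to a vertex of `S`. -/
def closedNbhd {V : Type*} (G : SimpleGraph V) (S : Set V) : Set V :=
  {v | v ∈ S ∨ ∃ u ∈ S, G.Adj u v}

/-- `S` is a `p`-dominating set of `G` if `|N[S]| ≥ p * |V|`. -/
def IsPDomSet {V : Type*} [Fintype V] (G : SimpleGraph V) (p : ℚ) (S : Set V) : Prop :=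
  p * (Fintype.card V : ℚ) ≤ ((closedNbhd G S).ncard : ℚ)

/-- The `p`-domination number: the minimum cardinality of a `p`-dominating set. -/
noncomputable def pDomNum {V : Type*} [Fintype V] (G : SimpleGraph V) (p : ℚ) : ℕ :=
  sInf {k | ∃ S : Set V, IsPDomSet G p S ∧ S.ncard = k}

/-- `S` is a dominating set of `G` if `N[S] = V`. -/
def IsDomSet {V : Type*} (G : SimpleGraph V) (S : Set V) : Prop :=
  closedNbhd G S = Set.univ

/-- The domination number: the minimum cardinality of a dominating set. -/
noncomputable def domNum {V : Type*} [Fintype V] (G : SimpleGraph V) : ℕ :=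
  sInf {k | ∃ S : Set V, IsDomSet G S ∧ S.ncard = k}

/-- Adjacency in the `2 × n` grid, in terms of natural number coordinates. -/
lemma grid_adj_iff {n : ℕ} (u v : Fin 2 × Fin n) :
    ((pathGraph 2).boxProd (pathGraph n)).Adj u v ↔
      ((u.1 : ℕ) ≠ v.1 ∧ (u.2 : ℕ) = v.2) ∨
      ((u.1 : ℕ) = v.1 ∧ ((u.2 : ℕ) + 1 = v.2 ∨ (v.2 : ℕ) + 1 = u.2)) := by
  obtain ⟨a, b⟩ := u
  obtain ⟨c, d⟩ := v
  simp only [boxProd_adj, pathGraph_adj, Fin.ext_iff]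
  omega

lemma ncard_closedNbhd_le {n : ℕ} (S : Set (Fin 2 × Fin n)) :
    (closedNbhd ((pathGraph 2).boxProd (pathGraph n)) S).ncard ≤ 4 * S.ncard := by
  classical
  set G := (pathGraph 2).boxProd (pathGraph n) with hG
  let N : Fin 2 × Fin n → Finset (Fin 2 × Fin n) :=
    fun u => Finset.univ.filter fun v => v = u ∨ G.Adj u v
  have hN : ∀ u, (N u).card ≤ 4 := by
    intro u
    -- Label the vertical neighbor by `3` and the row of `u` by the column offset plus one.
    have h := Finset.card_le_card_of_injOn (s := N u) (t := Finset.range 4)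
      (fun v => if (v.1 : ℕ) = u.1 then (v.2 : ℕ) + 1 - u.2 else 3) ?_ ?_
    · simpa using h
    · intro v hv
      simp only [N, hG, grid_adj_iff, Finset.coe_filter, Finset.mem_univ, true_and,
        Set.mem_ofPred_eq, Prod.ext_iff, Fin.ext_iff] at hv
      simp only [Finset.coe_range, Set.mem_Iio]
      split_ifs <;> omega
    · intro v hv w hw hvw
      simp only [N, hG, grid_adj_iff, Finset.coe_filter, Finset.mem_univ, true_and,
        Set.mem_ofPred_eq, Prod.ext_iff, Fin.ext_iff] at hv hw hvw ⊢
      split_ifs at hvw <;> omega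
  have hsub : closedNbhd G S ⊆ (S.toFinset.biUnion N : Finset _) := by
    rintro v (hv | ⟨u, hu, huv⟩)
    · simp only [Finset.coe_biUnion, Set.mem_iUnion]
      exact ⟨v, by simpa using hv, by simp [N]⟩
    · simp only [Finset.coe_biUnion, Set.mem_iUnion]
      exact ⟨u, by simpa using hu, by simp [N, huv]⟩
  have h1 := Set.ncard_le_ncard hsub (Finset.finite_toSet _)
  rw [Set.ncard_coe_finset] at h1
  have h2 := Finset.card_biUnion_le_card_mul S.toFinset N 4 fun u _ => hN u
  rw [← Set.ncard_eq_toFinset_card'] at h2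
  omega

/-- The `i`-th vertex of the optimal set: column `2 i + 1`, in alternating rows. -/
def gridCenter {n : ℕ} (hn : 2 ≤ n) (i : {i : ℕ // 4 * i < n}) : Fin 2 × Fin n :=
  (⟨i.1 % 2, by omega⟩, ⟨2 * i.1 + 1, by have := i.2; omega⟩)

/-- The `j`-th dominated vertex. With `j = 4 i + t`, the values `t = 0, 1, 2, 3` give the left
neighbor of the `i`-th center, the center itself, its vertical neighbor and its right neighbor. -/
def gridCover {n : ℕ} (j : Fin n) : Fin 2 × Fin n :=
  (⟨if j.1 % 4 = 2 then 1 - j.1 / 4 % 2 else j.1 / 4 % 2, by split_ifs <;> omega⟩,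
    ⟨2 * (j.1 / 4) + (j.1 % 4 + 1) / 2, by have := j.2; omega⟩)

lemma gridCover_injective {n : ℕ} : Function.Injective (gridCover (n := n)) := by
  intro a b h
  simp only [gridCover, Prod.mk.injEq, Fin.mk.injEq] at h
  obtain ⟨h1, h2⟩ := h
  apply Fin.ext
  split_ifs at h1 <;> omega

lemma gridCover_mem {n : ℕ} (hn : 2 ≤ n) (j : Fin n) :
    gridCover j ∈ closedNbhd ((pathGraph 2).boxProd (pathGraph n))
      (Set.range (gridCenter hn)) := by
  have hj := j.2
  have hi : 4 * (j.1 / 4) < n := by omega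
  by_cases ht : j.1 % 4 = 1
  · left
    refine ⟨⟨j.1 / 4, hi⟩, ?_⟩
    simp [gridCover, gridCenter, ht]
  · right
    refine ⟨_, ⟨⟨j.1 / 4, hi⟩, rfl⟩, ?_⟩
    rw [grid_adj_iff]
    simp only [gridCover, gridCenter]
    split_ifs <;> omega

/-- For the `2`-by-`n` grid graph `P_2 □ P_n` (`n ≥ 2`),
`γ_{1/2}(P_2 □ P_n) = ⌈n/4⌉`. -/
theorem halfDom_grid_two (n : ℕ) (hn : 2 ≤ n) :
    pDomNum ((pathGraph 2).boxProd (pathGraph n)) (1/2) = ⌈(n : ℚ) / 4⌉₊ := by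
  have hcard : ∀ S : Set (Fin 2 × Fin n),
      IsPDomSet ((pathGraph 2).boxProd (pathGraph n)) (1/2) S ↔
        n ≤ (closedNbhd ((pathGraph 2).boxProd (pathGraph n)) S).ncard := by
    intro S
    unfold IsPDomSet
    rw [← Nat.cast_le (α := ℚ)]
    simp
  have hlt : ∀ i : ℕ, i < ⌈(n : ℚ) / 4⌉₊ ↔ 4 * i < n := by
    intro i
    rw [Nat.lt_ceil, lt_div_iff₀ (by norm_num), mul_comm]
    exact_mod_cast Iff.rfl
  refine IsLeast.csInf_eq ⟨⟨Set.range (gridCenter hn), ?_, ?_⟩, ?_⟩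
  · rw [hcard]
    have h : Set.range (gridCover (n := n)) ⊆ _ := Set.range_subset_iff.2 (gridCover_mem hn)
    have h' := Set.ncard_le_ncard h (Set.toFinite _)
    rwa [Set.ncard_range_of_injective gridCover_injective, Nat.card_fin] at h'
  · rw [Set.ncard_range_of_injective]
    · rw [Nat.card_congr (Equiv.subtypeEquivRight fun i => (hlt i).symm)]
      exact (Nat.card_congr Fin.equivSubtype.symm).trans (Nat.card_fin _)
    · intro a b h
      simp only [gridCenter, Prod.mk.injEq, Fin.mk.injEq] at h
      exact Subtype.ext (by omega)
  · rintro k ⟨S, hS, rfl⟩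
    rw [hcard] at hS
    have h := hS.trans (ncard_closedNbhd_le S)
    by_contra hk
    have := (hlt _).1 (not_le.1 hk)
    omega
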